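/- arXiv:1610.03528 — 2 statements merged into one kernel-verified Lean document; each statement's English description precedes it below -/
import Mathlib

section
/- Let P ∈ ℚ[T,X] be an irreducible polynomial, separable of degree ≥ 1 in X over ℚ(T), with nontrivial Galois group G over ℚ(T). Let Δ(T) and ℓ(T) be the discriminant and leading coefficient of P (in X). Let M₁,…,M_r be representatives of all conjugacy classes of maximal subgroups of G, F_i the fixed field of M_i, and f_i(T,X) a monic irreducible polynomial in ℚ[T][X] such that F_i/ℚ(T) is generated by a root of f_i(T,X). Suppose t ∈ ℚ satisfies Δ(t)·ℓ(t)·∏_{i=1}^r disc f_i(t,X) ≠ 0. Then [the specialized polynomial P(t,X) is reducible over ℚ, or its Galois group G_t over ℚ is not isomorphic to G] if and only if there exists an index i such that f_i(t,X) has a rational root. -/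
open Polynomial

/-!
Let `L` be the splitting field of `P` over `ℚ(T)`, let `A` be the localization of `ℚ[T]` at the
prime `(T - t)`, and let `B` be the integral closure of `A` in `L`. Reduction at a maximal ideal `Q`
of `B` embeds the roots of `P` and of each `fᵢ` into the residue field `Ω = B/Q`, because
`P(t, X)` and the `fᵢ(t, X)` are separable, and the decomposition group `D ≤ G` of `Q` surjects onto
`Gal(Ω/ℚ)`. As `G` acts faithfully and transitively on the roots of `P`, the specialization is
irreducible with group isomorphic to `G` exactly when `D = G`. As the root `θᵢ` of `fᵢ` has
stabilizer `Mᵢ`, the polynomial `fᵢ(t, X)` has a rational root exactly when `D` is contained in a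
conjugate of `Mᵢ`. Finally `D ≠ G` means that `D` lies in some maximal subgroup.
-/

section NormalExtension

variable {K L : Type*} [Field K] [Field L] [Algebra K L] [Normal K L] {p : K[X]} {x : L}

theorem mem_range_algebraMap_of_forall_algEquiv_apply_eq (hsep : IsSeparable K x)
    (hfix : ∀ σ : Gal(L/K), σ x = x) : x ∈ Set.range (algebraMap K L) := by
  rw [← Algebra.mem_bot]
  by_contra hmem
  obtain ⟨y, hne, hconj⟩ :=
    (notMem_iff_exists_ne_and_isConjRoot hsep (Normal.splits inferInstance x)).mp hmem
  obtain ⟨σ, rfl⟩ := hconj.symm.exists_algEquiv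
  exact hne (hfix σ).symm

theorem splits_of_irreducible_of_aeval_eq_zero (hp : Irreducible p) (hx : aeval x p = 0) :
    (p.map (algebraMap K L)).Splits :=
  have hint : IsIntegral K x := Algebra.IsIntegral.isIntegral x
  (Normal.splits inferInstance x).of_dvd (Polynomial.map_ne_zero (minpoly.ne_zero hint))
    (Polynomial.map_dvd _ ((hp.dvd_iff_aeval_eq_zero hx).mp (minpoly.aeval K x)))

theorem irreducible_of_isPretransitive_rootSet (hsep : p.Separable)
    (hsplits : (p.map (algebraMap K L)).Splits) (hne : (p.rootSet L).Nonempty)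
    [MulAction.IsPretransitive Gal(L/K) (p.rootSet L)] : Irreducible p := by
  classical
  obtain ⟨x, hx⟩ := hne
  have hint : IsIntegral K x := Algebra.IsIntegral.isIntegral x
  have hroots : (p.map (algebraMap K L)).roots ≤ ((minpoly K x).map (algebraMap K L)).roots := by
    refine (Multiset.le_iff_subset (nodup_roots hsep.map)).mpr fun y hy => ?_
    have hroot : y ∈ p.rootSet L := by simpa [rootSet, aroots] using hy
    obtain ⟨σ, hσ⟩ := MulAction.exists_smul_eq Gal(L/K) (⟨x, hx⟩ : p.rootSet L) ⟨y, hroot⟩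
    obtain rfl : σ x = y := congrArg Subtype.val hσ
    exact mem_aroots.mpr ⟨minpoly.ne_zero hint, by
      rw [aeval_algHom_apply, minpoly.aeval, map_zero]⟩
  have hassoc : Associated (minpoly K x) p := associated_of_dvd_dvd
    (minpoly.dvd K x (aeval_eq_zero_of_mem_rootSet hx))
    ((map_dvd_map' _).mp (hsplits.dvd_of_roots_le_roots hsep.map.ne_zero hroots))
  exact hassoc.irreducible (minpoly.irreducible hint)

end NormalExtension

theorem map_algebraMap_map_algebraMap {R S T : Type*} [CommSemiring R] [CommSemiring S] [Semiring T]
    [Algebra R S] [Algebra R T] [Algebra S T] [IsScalarTower R S T] (F : R[X]) :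
    (F.map (algebraMap R S)).map (algebraMap S T) = F.map (algebraMap R T) := by
  rw [Polynomial.map_map, ← IsScalarTower.algebraMap_eq]

section Reduction

variable {A B k Ω : Type*} [CommRing A] [CommRing B] [Algebra A B]
  [Field k] [Field Ω] [Algebra A k] [Algebra A Ω] [Algebra k Ω] [Algebra B Ω] {F : A[X]}

theorem rootSet_map_algebraMap [IsScalarTower A k Ω] (F : A[X]) :
    (F.map (algebraMap A k)).rootSet Ω = F.rootSet Ω := by
  classical
  simp only [rootSet, aroots, map_algebraMap_map_algebraMap]

theorem separable_map_algebraMap [IsScalarTower A k Ω]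
    (hsep : (F.map (algebraMap A k)).Separable) : (F.map (algebraMap A Ω)).Separable := by
  rw [← map_algebraMap_map_algebraMap (S := k)]
  exact hsep.map

variable [IsScalarTower A B Ω]

theorem splits_map_algebraMap [IsScalarTower A k Ω] (hsplits : (F.map (algebraMap A B)).Splits) :
    ((F.map (algebraMap A k)).map (algebraMap k Ω)).Splits := by
  rw [map_algebraMap_map_algebraMap, ← map_algebraMap_map_algebraMap (S := B)]
  exact hsplits.map _

variable [IsDomain B]

theorem image_algebraMap_rootSet (hsplits : (F.map (algebraMap A B)).Splits)
    (hF : F.map (algebraMap A Ω) ≠ 0) : algebraMap B Ω '' F.rootSet B = F.rootSet Ω :=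
  hsplits.image_rootSet_of_map_ne_zero (IsScalarTower.toAlgHom A B Ω) hF

theorem injOn_algebraMap_rootSet (hsplits : (F.map (algebraMap A B)).Splits)
    (hsep : (F.map (algebraMap A Ω)).Separable) :
    Set.InjOn (algebraMap B Ω) (F.rootSet B) := by
  classical
  have hmap := map_algebraMap_map_algebraMap (S := B) (T := Ω) F
  have hroots := hsplits.roots_map_of_ne_zero (hmap ▸ hsep.ne_zero)
  have hnodup : ((F.map (algebraMap A B)).roots.map (algebraMap B Ω)).Nodup := by
    rw [← hroots, hmap]
    exact nodup_roots hsep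
  intro b hb b' hb'
  rw [rootSet, Finset.mem_coe, Multiset.mem_toFinset] at hb hb'
  exact Multiset.inj_on_of_nodup_map hnodup b hb b' hb'

end Reduction

section Decomposition

/-- A surjection `ρ` of a subgroup `D` of `G` onto `Gal(Ω/k)` that describes the action of `D` on
the image of `B` in `Ω`. This abstracts the decomposition group of a maximal ideal `Q` of `B`
acting on the residue field `Ω = B ⧸ Q`; that `D` is the full stabilizer of `Q` is not recorded. -/
structure IsDecompositionHom (B : Type*) {k Ω G : Type*} [CommRing B] [Field k] [Field Ω]
    [Algebra k Ω] [Algebra B Ω] [Group G] [MulSemiringAction G B] {D : Subgroup G}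
    (ρ : D →* Gal(Ω/k)) : Prop where
  surjective : Function.Surjective ρ
  apply_algebraMap (σ : D) (b : B) : ρ σ (algebraMap B Ω b) = algebraMap B Ω ((σ : G) • b)

universe v

open scoped Pointwise in
theorem exists_isDecompositionHom (A k G : Type*) (B : Type v) [CommRing A] [CommRing B]
    [Algebra A B] [FaithfulSMul A B] [Field k] [Algebra A k] [Group G] [Finite G]
    [MulSemiringAction G B] [SMulCommClass G A B] [Algebra.IsInvariant A B G]
    (hk : Function.Surjective (algebraMap A k)) :
    ∃ (Ω : Type v) (_ : Field Ω) (_ : Algebra A Ω) (_ : Algebra k Ω) (_ : Algebra B Ω)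
      (_ : IsScalarTower A k Ω) (_ : IsScalarTower A B Ω) (_ : Normal k Ω)
      (D : Subgroup G) (ρ : D →* Gal(Ω/k)), IsDecompositionHom B ρ := by
  have : Algebra.IsIntegral A B := Algebra.IsInvariant.isIntegral A B G
  let p : Ideal A := RingHom.ker (algebraMap A k)
  have hp : p.IsMaximal := RingHom.ker_isMaximal_of_surjective _ hk
  obtain ⟨Q, _, _⟩ := Ideal.exists_maximal_ideal_liesOver_of_isIntegral (S := B) p
  let : Field (A ⧸ p) := Ideal.Quotient.field p
  let : Field (B ⧸ Q) := Ideal.Quotient.field Q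
  let e : (A ⧸ p) ≃+* k := RingHom.quotientKerEquivOfSurjective hk
  let : Algebra (A ⧸ p) k := e.toRingHom.toAlgebra
  let : Algebra k (B ⧸ Q) :=
    ((algebraMap (A ⧸ p) (B ⧸ Q)).comp e.symm.toRingHom).toAlgebra
  have : IsScalarTower (A ⧸ p) k (B ⧸ Q) :=
    IsScalarTower.of_algebraMap_eq fun x => by simp [RingHom.algebraMap_toAlgebra]
  have : IsScalarTower A k (B ⧸ Q) := IsScalarTower.of_algebraMap_eq fun x => by
    have hx : algebraMap A k x = algebraMap (A ⧸ p) k (Ideal.Quotient.mk p x) := rfl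
    rw [hx, ← IsScalarTower.algebraMap_apply]
    rfl
  have : IsFractionRing (A ⧸ p) k := IsLocalization.isLocalization_of_algEquiv _
    (AlgEquiv.ofRingEquiv (f := e) fun _ => rfl)
  exact ⟨B ⧸ Q, inferInstance, inferInstance, inferInstance, inferInstance, inferInstance,
    inferInstance, Ideal.IsFractionRing.normal G p Q k (B ⧸ Q), MulAction.stabilizer G Q,
    IsFractionRing.stabilizerHom G p Q k (B ⧸ Q),
    IsFractionRing.stabilizerHom_surjective G p Q k (B ⧸ Q),
    IsFractionRing.stabilizerHom_apply_apply_mk G p Q k (B ⧸ Q)⟩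

variable {A B k Ω G : Type*} [CommRing A] [CommRing B] [IsDomain B] [Algebra A B]
  [Field k] [Field Ω] [Algebra A k] [Algebra A Ω] [Algebra k Ω] [Algebra B Ω]
  [IsScalarTower A k Ω] [IsScalarTower A B Ω] [Normal k Ω]
  [Group G] [MulSemiringAction G B] [SMulCommClass G A B]
  {D : Subgroup G} {ρ : D →* Gal(Ω/k)} {F : A[X]}

namespace IsDecompositionHom

theorem exists_eval_eq_zero_iff_exists_le_stabilizer (hρ : IsDecompositionHom B ρ)
    (hsplits : (F.map (algebraMap A B)).Splits) (hsep : (F.map (algebraMap A k)).Separable) :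
    (∃ x : k, (F.map (algebraMap A k)).eval x = 0) ↔
      ∃ b ∈ F.rootSet B, D ≤ MulAction.stabilizer G b := by
  have hsepΩ : (F.map (algebraMap A Ω)).Separable := separable_map_algebraMap hsep
  constructor
  · rintro ⟨x, hx⟩
    have hroot : algebraMap k Ω x ∈ F.rootSet Ω := by
      rw [← rootSet_map_algebraMap (k := k), mem_rootSet_of_ne hsep.ne_zero,
        aeval_algebraMap_apply_eq_algebraMap_eval, hx, map_zero]
    rw [← image_algebraMap_rootSet hsplits hsepΩ.ne_zero] at hroot
    obtain ⟨b, hb, hbx⟩ := hroot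
    refine ⟨b, hb, fun σ hσ =>
      injOn_algebraMap_rootSet hsplits hsepΩ (smul_mem_rootSet σ hb) hb ?_⟩
    rw [← hρ.apply_algebraMap ⟨σ, hσ⟩ b, hbx, AlgEquiv.commutes]
  · rintro ⟨b, hb, hD⟩
    have hroot : aeval (algebraMap B Ω b) (F.map (algebraMap A k)) = 0 := by
      rw [aeval_map_algebraMap, aeval_algebraMap_apply, aeval_eq_zero_of_mem_rootSet hb, map_zero]
    have hfix (τ : Gal(Ω/k)) : τ (algebraMap B Ω b) = algebraMap B Ω b := by
      obtain ⟨σ, rfl⟩ := hρ.surjective τ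
      rw [hρ.apply_algebraMap, hD σ.2]
    obtain ⟨x, hx⟩ := mem_range_algebraMap_of_forall_algEquiv_apply_eq
      (hsep.of_dvd (minpoly.dvd k _ hroot)) hfix
    refine ⟨x, (algebraMap k Ω).injective ?_⟩
    rwa [← hx, aeval_algebraMap_apply_eq_algebraMap_eval, ← map_zero (algebraMap k Ω)] at hroot

theorem exists_eval_eq_zero_iff_exists_le_map_conj (hρ : IsDecompositionHom B ρ)
    [MulAction.IsPretransitive G (F.rootSet B)] (hsplits : (F.map (algebraMap A B)).Splits)
    (hsep : (F.map (algebraMap A k)).Separable) {θ : B} (hθ : θ ∈ F.rootSet B) :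
    (∃ x : k, (F.map (algebraMap A k)).eval x = 0) ↔
      ∃ g : G, D ≤ (MulAction.stabilizer G θ).map (MulAut.conj g).toMonoidHom := by
  rw [hρ.exists_eval_eq_zero_iff_exists_le_stabilizer hsplits hsep]
  constructor
  · rintro ⟨b, hb, hD⟩
    obtain ⟨g, hg⟩ := MulAction.exists_smul_eq G (⟨θ, hθ⟩ : F.rootSet B) ⟨b, hb⟩
    obtain rfl : g • θ = b := congrArg Subtype.val hg
    exact ⟨g, hD.trans_eq (MulAction.stabilizer_smul_eq_stabilizer_map_conj g θ)⟩
  · rintro ⟨g, hD⟩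
    exact ⟨g • θ, smul_mem_rootSet g hθ,
      hD.trans_eq (MulAction.stabilizer_smul_eq_stabilizer_map_conj g θ).symm⟩

theorem irreducible_map_of_eq_top (hρ : IsDecompositionHom B ρ) (hD : D = ⊤)
    [MulAction.IsPretransitive G (F.rootSet B)] (hne : (F.rootSet B).Nonempty)
    (hsplits : (F.map (algebraMap A B)).Splits) (hsep : (F.map (algebraMap A k)).Separable) :
    Irreducible (F.map (algebraMap A k)) := by
  subst hD
  have himage : algebraMap B Ω '' F.rootSet B = (F.map (algebraMap A k)).rootSet Ω := by
    rw [rootSet_map_algebraMap, image_algebraMap_rootSet hsplits]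
    exact (separable_map_algebraMap hsep).ne_zero
  have : MulAction.IsPretransitive Gal(Ω/k) ((F.map (algebraMap A k)).rootSet Ω) := by
    refine ⟨fun ⟨x, hx⟩ ⟨y, hy⟩ => ?_⟩
    obtain ⟨b, hb, rfl⟩ := himage.symm ▸ hx
    obtain ⟨c, hc, rfl⟩ := himage.symm ▸ hy
    obtain ⟨σ, hσ⟩ := MulAction.exists_smul_eq G (⟨b, hb⟩ : F.rootSet B) ⟨c, hc⟩
    refine ⟨ρ ⟨σ, trivial⟩, Subtype.ext ?_⟩
    exact (hρ.apply_algebraMap _ b).trans (congrArg (algebraMap B Ω ∘ Subtype.val) hσ)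
  exact irreducible_of_isPretransitive_rootSet hsep (splits_map_algebraMap hsplits)
    (himage ▸ hne.image _)

theorem nonempty_mulEquiv_gal (hρ : IsDecompositionHom B ρ) [FaithfulSMul G (F.rootSet B)]
    (hsplits : (F.map (algebraMap A B)).Splits) (hsep : (F.map (algebraMap A k)).Separable) :
    Nonempty (D ≃* (F.map (algebraMap A k)).Gal) := by
  have hsepΩ : (F.map (algebraMap A Ω)).Separable := separable_map_algebraMap hsep
  have : Fact ((F.map (algebraMap A k)).map (algebraMap k Ω)).Splits :=
    ⟨splits_map_algebraMap hsplits⟩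
  let r : D →* (F.map (algebraMap A k)).Gal := (Gal.restrict _ Ω).comp ρ
  have hsurj : Function.Surjective r := (Gal.restrict_surjective _ Ω).comp hρ.surjective
  have hinj : Function.Injective r := by
    refine (injective_iff_map_eq_one r).mpr fun σ hσ => Subtype.ext ?_
    refine FaithfulSMul.eq_of_smul_eq_smul (α := F.rootSet B) fun ⟨b, hb⟩ => Subtype.ext ?_
    have hroot : algebraMap B Ω b ∈ (F.map (algebraMap A k)).rootSet Ω := by
      rw [rootSet_map_algebraMap, ← image_algebraMap_rootSet hsplits hsepΩ.ne_zero]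
      exact Set.mem_image_of_mem _ hb
    have hfix : ρ σ (algebraMap B Ω b) = algebraMap B Ω b := by
      rw [← Gal.restrict_smul (ρ σ) ⟨_, hroot⟩]
      change ((r σ • _ : (F.map (algebraMap A k)).rootSet Ω) : Ω) = _
      rw [hσ, one_smul]
    rw [hρ.apply_algebraMap] at hfix
    simpa using injOn_algebraMap_rootSet hsplits hsepΩ (smul_mem_rootSet _ hb) hb hfix
  exact ⟨MulEquiv.ofBijective r ⟨hinj, hsurj⟩⟩

theorem irreducible_and_nonempty_mulEquiv_iff_eq_top (hρ : IsDecompositionHom B ρ) [Finite G]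
    [MulAction.IsPretransitive G (F.rootSet B)] [FaithfulSMul G (F.rootSet B)]
    (hne : (F.rootSet B).Nonempty) (hsplits : (F.map (algebraMap A B)).Splits)
    (hsep : (F.map (algebraMap A k)).Separable) :
    Irreducible (F.map (algebraMap A k)) ∧ Nonempty ((F.map (algebraMap A k)).Gal ≃* G) ↔
      D = ⊤ := by
  obtain ⟨e⟩ := hρ.nonempty_mulEquiv_gal hsplits hsep
  constructor
  · rintro ⟨-, ⟨e'⟩⟩
    exact D.eq_top_of_card_eq (Nat.card_congr (e.trans e').toEquiv)
  · rintro rfl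
    exact ⟨hρ.irreducible_map_of_eq_top rfl hne hsplits hsep,
      ⟨e.symm.trans Subgroup.topEquiv⟩⟩

end IsDecompositionHom

end Decomposition

theorem ne_top_iff_exists_le_map_conj {G ι : Type*} [Group G] [IsCoatomic (Subgroup G)]
    {M : ι → Subgroup G} (hmax : ∀ i, IsCoatom (M i))
    (hrep : ∀ H : Subgroup G, IsCoatom H → ∃ i g, (M i).map (MulAut.conj g).toMonoidHom = H)
    (D : Subgroup G) : D ≠ ⊤ ↔ ∃ i g, D ≤ (M i).map (MulAut.conj g).toMonoidHom := by
  constructor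
  · intro hD
    obtain ⟨H, hH, hDH⟩ := (eq_top_or_exists_le_coatom D).resolve_left hD
    obtain ⟨i, g, rfl⟩ := hrep H hH
    exact ⟨i, g, hDH⟩
  · rintro ⟨i, g, hD⟩ rfl
    have hmap : (M i).map (MulAut.conj g).toMonoidHom =
        (⊤ : Subgroup G).map (MulAut.conj g).toMonoidHom := by
      rw [Subgroup.map_top_of_surjective _ (MulAut.conj g).surjective]
      exact top_le_iff.mp hD
    exact (hmax i).1 (Subgroup.map_injective (MulAut.conj g).injective hmap)

theorem stabilizer_eq_of_fixedField_eq_adjoin {K L : Type*} [Field K] [Field L] [Algebra K L]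
    [FiniteDimensional K L] {M : Subgroup Gal(L/K)} {θ : L}
    (hθ : IntermediateField.fixedField M = IntermediateField.adjoin K {θ}) :
    MulAction.stabilizer Gal(L/K) θ = M := by
  rw [← IntermediateField.fixingSubgroup_fixedField M, hθ]
  apply le_antisymm
  · rw [← IntermediateField.le_iff_le, IntermediateField.adjoin_simple_le_iff]
    exact fun σ => σ.2
  · exact fun σ hσ => (IntermediateField.mem_fixingSubgroup_iff _ _).mp hσ θ
      (IntermediateField.mem_adjoin_simple_self K θ)

section IntegralClosure

theorem isIntegral_of_isUnit_leadingCoeff {A S : Type*} [CommRing A] [CommRing S] [Algebra A S]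
    {F : A[X]} (hl : IsUnit F.leadingCoeff) {x : S} (hx : aeval x F = 0) : IsIntegral A x := by
  obtain ⟨u, hu⟩ := hl
  have hint : IsIntegral A ((u : A) • x) := hu ▸ isIntegral_leadingCoeff_smul F x hx
  simpa only [smul_smul, Units.inv_mul, one_smul] using hint.smul (↑u⁻¹ : A)

variable {A K L : Type*} [CommRing A] [Field K] [Algebra A K] [Field L] [Algebra K L]
  [Algebra A L] {F : A[X]}

theorem coe_mem_rootSet_iff {b : integralClosure A L} :
    (b : L) ∈ F.rootSet L ↔ b ∈ F.rootSet (integralClosure A L) := by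
  have hinj : Function.Injective (algebraMap (integralClosure A L) L) := Subtype.val_injective
  rw [mem_rootSet', mem_rootSet', IsScalarTower.algebraMap_eq A (integralClosure A L) L,
    ← Polynomial.map_map, Polynomial.map_ne_zero_iff hinj]
  refine and_congr_right' ((Eq.congr_left (aeval_algebraMap_apply L b F)).trans ?_)
  exact map_eq_zero_iff _ hinj

theorem splits_map_integralClosure (hl : IsUnit F.leadingCoeff)
    (hsplits : (F.map (algebraMap A L)).Splits) :
    (F.map (algebraMap A (integralClosure A L))).Splits := by
  have hmap := map_algebraMap_map_algebraMap (S := integralClosure A L) (T := L) F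
  refine Splits.of_splits_map_of_injective (i := algebraMap (integralClosure A L) L)
    Subtype.val_injective (hmap ▸ hsplits) fun x hx => ?_
  rw [hmap, mem_roots', IsRoot.def, eval_map_algebraMap] at hx
  exact ⟨⟨x, isIntegral_of_isUnit_leadingCoeff hl hx.2⟩, rfl⟩

variable [IsScalarTower A K L]

theorem isPretransitive_rootSet_integralClosure [Normal K L]
    (hirr : Irreducible (F.map (algebraMap A K))) :
    MulAction.IsPretransitive Gal(L/K) (F.rootSet (integralClosure A L)) := by
  have hminpoly {b : integralClosure A L} (hb : b ∈ F.rootSet (integralClosure A L)) :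
      F.map (algebraMap A K) * C (F.map (algebraMap A K)).leadingCoeff⁻¹ = minpoly K (b : L) := by
    refine minpoly.eq_of_irreducible hirr ?_
    rw [aeval_map_algebraMap, aeval_eq_zero_of_mem_rootSet (coe_mem_rootSet_iff.mpr hb)]
  refine ⟨fun ⟨b, hb⟩ ⟨c, hc⟩ => ?_⟩
  obtain ⟨σ, hσ⟩ := (Normal.minpoly_eq_iff_mem_orbit L).mp ((hminpoly hc).symm.trans (hminpoly hb))
  exact ⟨σ, Subtype.ext (Subtype.ext hσ)⟩

theorem faithfulSMul_rootSet_integralClosure [IsSplittingField K L (F.map (algebraMap A K))]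
    (hl : IsUnit F.leadingCoeff) :
    FaithfulSMul Gal(L/K) (F.rootSet (integralClosure A L)) := by
  refine ⟨fun {σ τ} h => ?_⟩
  have hadjoin := IsSplittingField.adjoin_rootSet L (F.map (algebraMap A K))
  have heq : σ.toAlgHom = τ.toAlgHom := by
    refine AlgHom.ext_of_adjoin_eq_top hadjoin fun x hx => ?_
    rw [rootSet_map_algebraMap] at hx
    have hint := isIntegral_of_isUnit_leadingCoeff hl (aeval_eq_zero_of_mem_rootSet hx)
    let b : integralClosure A L := ⟨x, hint⟩
    have hb : b ∈ F.rootSet (integralClosure A L) := coe_mem_rootSet_iff.mp hx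
    exact congrArg (fun c => (c.1 : L)) (h ⟨b, hb⟩)
  exact AlgEquiv.ext fun x => DFunLike.congr_fun heq x

theorem isInvariant_integralClosure [IsDomain A] [IsIntegrallyClosed A] [IsFractionRing A K]
    [FiniteDimensional K L] [IsGalois K L] :
    Algebra.IsInvariant A (integralClosure A L) Gal(L/K) :=
  have := integralClosure.isFractionRing_of_finite_extension (A := A) K L
  (IsGaloisGroup.of_isFractionRing Gal(L/K) A (integralClosure A L) K L).isInvariant

end IntegralClosure

section Surjective

variable {A K L k Ω : Type*} [CommRing A] [Field K] [Algebra A K] [Field L] [Algebra K L]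
  [Algebra A L] [IsScalarTower A K L] [Field k] [Algebra A k] {F : A[X]}

namespace IsDecompositionHom

variable [Field Ω] [Algebra A Ω] [Algebra k Ω] [Algebra (integralClosure A L) Ω]
  [IsScalarTower A k Ω] [IsScalarTower A (integralClosure A L) Ω] [Normal k Ω]
  {D : Subgroup Gal(L/K)} {ρ : D →* Gal(Ω/k)}

theorem irreducible_and_nonempty_mulEquiv_iff_eq_top_of_isSplittingField
    (hρ : IsDecompositionHom (integralClosure A L) ρ)
    [IsSplittingField K L (F.map (algebraMap A K))] (hl : IsUnit F.leadingCoeff)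
    (hirr : Irreducible (F.map (algebraMap A K))) (hsep : (F.map (algebraMap A k)).Separable) :
    Irreducible (F.map (algebraMap A k)) ∧ Nonempty ((F.map (algebraMap A k)).Gal ≃* Gal(L/K)) ↔
      D = ⊤ := by
  have : FiniteDimensional K L := IsSplittingField.finiteDimensional L (F.map (algebraMap A K))
  have : Normal K L := Normal.of_isSplittingField (F.map (algebraMap A K))
  have := isPretransitive_rootSet_integralClosure (L := L) hirr
  have := faithfulSMul_rootSet_integralClosure (K := K) (L := L) hl
  have hsplits := IsSplittingField.splits L (F.map (algebraMap A K))
  obtain ⟨θ, hθ⟩ := hsplits.exists_eval_eq_zero <| by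
    simpa only [degree_map] using (degree_pos_of_irreducible hirr).ne'
  have hroot : θ ∈ F.rootSet L := by
    rwa [← rootSet_map_algebraMap (k := K), mem_rootSet_of_ne hirr.ne_zero, ← eval_map_algebraMap]
  have hint := isIntegral_of_isUnit_leadingCoeff hl (aeval_eq_zero_of_mem_rootSet hroot)
  rw [map_algebraMap_map_algebraMap] at hsplits
  exact hρ.irreducible_and_nonempty_mulEquiv_iff_eq_top
    ⟨⟨θ, hint⟩, coe_mem_rootSet_iff.mp hroot⟩ (splits_map_integralClosure hl hsplits) hsep

theorem exists_eval_eq_zero_iff_exists_le_map_conj_of_fixedField_eq_adjoin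
    (hρ : IsDecompositionHom (integralClosure A L) ρ) [FiniteDimensional K L] [Normal K L]
    (hl : IsUnit F.leadingCoeff) (hirr : Irreducible (F.map (algebraMap A K)))
    (hsep : (F.map (algebraMap A k)).Separable) {M : Subgroup Gal(L/K)} {θ : L}
    (hθ : aeval θ (F.map (algebraMap A K)) = 0)
    (hM : IntermediateField.fixedField M = IntermediateField.adjoin K {θ}) :
    (∃ x : k, (F.map (algebraMap A k)).eval x = 0) ↔
      ∃ g, D ≤ M.map (MulAut.conj g).toMonoidHom := by
  have := isPretransitive_rootSet_integralClosure (L := L) hirr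
  have hsplits := splits_of_irreducible_of_aeval_eq_zero hirr hθ
  have hroot : θ ∈ F.rootSet L := by
    rwa [← rootSet_map_algebraMap (k := K), mem_rootSet_of_ne hirr.ne_zero]
  let b : integralClosure A L :=
    ⟨θ, isIntegral_of_isUnit_leadingCoeff hl (aeval_eq_zero_of_mem_rootSet hroot)⟩
  have hstab : MulAction.stabilizer Gal(L/K) b = M := by
    rw [← stabilizer_eq_of_fixedField_eq_adjoin hM]
    ext σ
    exact Subtype.ext_iff
  rw [map_algebraMap_map_algebraMap] at hsplits
  rw [← hstab]
  exact hρ.exists_eval_eq_zero_iff_exists_le_map_conj (splits_map_integralClosure hl hsplits) hsep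
    (coe_mem_rootSet_iff.mp hroot)

end IsDecompositionHom

theorem not_irreducible_or_isEmpty_gal_iff_of_surjective {ι : Type*} [IsDomain A]
    [IsIntegrallyClosed A] [IsFractionRing A K] (hk : Function.Surjective (algebraMap A k))
    {P : A[X]} [IsSplittingField K L (P.map (algebraMap A K))] (hl : IsUnit P.leadingCoeff)
    (hP : Irreducible (P.map (algebraMap A K))) (hsep : (P.map (algebraMap A K)).Separable)
    (hΔ : (P.map (algebraMap A k)).Separable)
    {M : ι → Subgroup Gal(L/K)} (hmax : ∀ i, IsCoatom (M i))
    (hrep : ∀ H : Subgroup Gal(L/K),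
      IsCoatom H → ∃ i g, (M i).map (MulAut.conj g).toMonoidHom = H)
    {f : ι → A[X]} (hfl : ∀ i, IsUnit (f i).leadingCoeff)
    (hf : ∀ i, Irreducible ((f i).map (algebraMap A K)))
    (hdisc : ∀ i, ((f i).map (algebraMap A k)).Separable)
    (hgen : ∀ i, ∃ θ : L, aeval θ ((f i).map (algebraMap A K)) = 0 ∧
      IntermediateField.fixedField (M i) = IntermediateField.adjoin K {θ}) :
    (¬ Irreducible (P.map (algebraMap A k)) ∨
        IsEmpty ((P.map (algebraMap A k)).Gal ≃* Gal(L/K))) ↔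
      ∃ i, ∃ x : k, ((f i).map (algebraMap A k)).eval x = 0 := by
  have : IsGalois K L := IsGalois.of_separable_splitting_field hsep
  have : FiniteDimensional K L := IsSplittingField.finiteDimensional L (P.map (algebraMap A K))
  have : FaithfulSMul A L := FaithfulSMul.trans A K L
  have : FaithfulSMul A (integralClosure A L) := FaithfulSMul.tower_bot A _ L
  have := isInvariant_integralClosure (A := A) (K := K) (L := L)
  obtain ⟨Ω, _, _, _, _, _, _, _, D, ρ, hρ⟩ :=
    exists_isDecompositionHom A k Gal(L/K) (integralClosure A L) hk
  have hroot (i : ι) : (∃ x : k, ((f i).map (algebraMap A k)).eval x = 0) ↔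
      ∃ g, D ≤ (M i).map (MulAut.conj g).toMonoidHom := by
    obtain ⟨θ, hθ, hM⟩ := hgen i
    exact hρ.exists_eval_eq_zero_iff_exists_le_map_conj_of_fixedField_eq_adjoin
      (hfl i) (hf i) (hdisc i) hθ hM
  rw [← not_nonempty_iff, ← not_and_or,
    hρ.irreducible_and_nonempty_mulEquiv_iff_eq_top_of_isSplittingField hl hP hΔ]
  simp only [hroot]
  exact ne_top_iff_exists_le_map_conj hmax hrep D

end Surjective

section Specialization

variable {R k : Type*} (K : Type*) [CommRing R] [IsDomain R] [IsIntegrallyClosed R]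
  [Field K] [Algebra R K] [IsFractionRing R K] [Field k]

theorem exists_subalgebra_surjective_extension (φ : R →+* k)
    (hφ : ∀ x : k, ∃ a b : R, φ b ≠ 0 ∧ φ a / φ b = x) :
    ∃ (A : Subalgebra R K) (ψ : A →+* k), IsIntegrallyClosed A ∧ Function.Surjective ψ ∧
      ψ.comp (algebraMap R A) = φ ∧ ∀ x, φ x ≠ 0 → IsUnit (algebraMap R A x) := by
  have : (RingHom.ker φ).IsPrime := RingHom.ker_isPrime φ
  let S : Submonoid R := (RingHom.ker φ).primeCompl
  have hS : S ≤ nonZeroDivisors R := (RingHom.ker φ).primeCompl_le_nonZeroDivisors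
  let A : Subalgebra R K := Localization.subalgebra.ofField K S hS
  have hunit (s : S) : IsUnit (φ s) := (show φ s ≠ 0 from s.2).isUnit
  refine ⟨A, IsLocalization.lift hunit, isIntegrallyClosed_of_isLocalization A S hS, ?_,
    IsLocalization.lift_comp hunit, fun x hx => IsLocalization.map_units A (⟨x, hx⟩ : S)⟩
  refine (IsLocalization.lift_surjective_iff hunit).mpr fun x => ?_
  obtain ⟨a, b, hb, rfl⟩ := hφ x
  exact ⟨(a, ⟨b, hb⟩), div_mul_cancel₀ _ hb⟩

variable {K}

theorem stmt_2_general {ι : Type*} (φ : R →+* k)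
    (hφ : ∀ x : k, ∃ a b : R, φ b ≠ 0 ∧ φ a / φ b = x)
    (P : R[X]) (hP : Irreducible (P.map (algebraMap R K)))
    (hsep : (P.map (algebraMap R K)).Separable)
    (M : ι → Subgroup (P.map (algebraMap R K)).Gal) (hmax : ∀ i, IsCoatom (M i))
    (hrep : ∀ H : Subgroup (P.map (algebraMap R K)).Gal,
      IsCoatom H → ∃ i, ∃ g, (M i).map (MulAut.conj g).toMonoidHom = H)
    (f : ι → R[X]) (hf : ∀ i, Irreducible ((f i).map (algebraMap R K)))
    (hgen : ∀ i, ∃ θ : (P.map (algebraMap R K)).SplittingField,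
      aeval θ ((f i).map (algebraMap R K)) = 0 ∧
        IntermediateField.fixedField (M i) = IntermediateField.adjoin K {θ})
    (hl : φ P.leadingCoeff ≠ 0) (hΔ : (P.map φ).Separable)
    (hfl : ∀ i, φ (f i).leadingCoeff ≠ 0) (hdisc : ∀ i, ((f i).map φ).Separable) :
    (¬ Irreducible (P.map φ) ∨ IsEmpty ((P.map φ).Gal ≃* (P.map (algebraMap R K)).Gal)) ↔
      ∃ i, ∃ x : k, ((f i).map φ).eval x = 0 := by
  obtain ⟨A, ψ, _, hψ, hψφ, hunit⟩ := exists_subalgebra_surjective_extension K φ hφ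
  let : Algebra A k := ψ.toAlgebra
  have hlA {F : R[X]} (hF : φ F.leadingCoeff ≠ 0) :
      IsUnit (F.map (algebraMap R A)).leadingCoeff := by
    rw [leadingCoeff_map_of_injective (FaithfulSMul.algebraMap_injective R A)]
    exact hunit _ hF
  have hK (F : R[X]) : (F.map (algebraMap R A)).map (algebraMap A K) = F.map (algebraMap R K) :=
    map_algebraMap_map_algebraMap F
  have hk (F : R[X]) : F.map φ = (F.map (algebraMap R A)).map (algebraMap A k) := by
    rw [Polynomial.map_map, RingHom.algebraMap_toAlgebra, hψφ]
  let L := (P.map (algebraMap R K)).SplittingField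
  have : IsSplittingField K L ((P.map (algebraMap R A)).map (algebraMap A K)) := by
    rw [hK]
    infer_instance
  rw [hk P] at hΔ ⊢
  simp only [hk (f _)] at hdisc ⊢
  exact not_irreducible_or_isEmpty_gal_iff_of_surjective (K := K) (L := L) hψ (hlA hl)
    (hK P ▸ hP) (hK P ▸ hsep) hΔ hmax hrep (fun i => hlA (hfl i))
    (fun i => hK (f i) ▸ hf i) hdisc (fun i => hK (f i) ▸ hgen i)

end Specialization

/-- Theorem `main_hit_thm_intro`: Let `P ∈ ℚ[T][X]` be irreducible,
separable of degree `≥ 1` in `X` over `ℚ(T)`, with nontrivial Galois group `G` over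
`ℚ(T)`.  Let `M₁, …, M_r` represent all conjugacy classes of maximal subgroups of `G`,
`F_i` the fixed field of `M_i`, and `f_i(T,X)` a monic irreducible polynomial of
`ℚ[T][X]` such that `F_i/ℚ(T)` is generated by a root of `f_i`.  If `t ∈ ℚ` satisfies
`Δ(t)·ℓ(t)·∏ᵢ disc f_i(t,X) ≠ 0` (equivalently `ℓ(t) ≠ 0` and the specializations
`P(t,X)` and `f_i(t,X)` are all separable), then `P(t,X)` is reducible over `ℚ` or has
Galois group not isomorphic to `G` iff some `f_i(t,X)` has a rational root. -/
theorem stmt_2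
    (P : Polynomial (Polynomial ℚ))
    (hPirr : Irreducible P)
    (hdeg : 1 ≤ P.natDegree)
    (hsep : (P.map (algebraMap (Polynomial ℚ) (RatFunc ℚ))).Separable)
    (hG : Nontrivial (P.map (algebraMap (Polynomial ℚ) (RatFunc ℚ))).Gal)
    (r : ℕ)
    (M : Fin r → Subgroup (P.map (algebraMap (Polynomial ℚ) (RatFunc ℚ))).Gal)
    (hmax : ∀ i, IsCoatom (M i))
    (hrep : ∀ H : Subgroup (P.map (algebraMap (Polynomial ℚ) (RatFunc ℚ))).Gal,
      IsCoatom H → ∃ i, ∃ g, Subgroup.map (MulAut.conj g).toMonoidHom (M i) = H)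
    (f : Fin r → Polynomial (Polynomial ℚ))
    (hmonic : ∀ i, (f i).Monic)
    (hirr : ∀ i, Irreducible (f i))
    (hgen : ∀ i, ∃ θ : (P.map (algebraMap (Polynomial ℚ) (RatFunc ℚ))).SplittingField,
      Polynomial.aeval θ ((f i).map (algebraMap (Polynomial ℚ) (RatFunc ℚ))) = 0 ∧
        IntermediateField.fixedField (M i) = IntermediateField.adjoin (RatFunc ℚ) {θ})
    (t : ℚ)
    (hl : P.leadingCoeff.eval t ≠ 0)
    (hΔ : (P.map (Polynomial.evalRingHom t)).Separable)
    (hdisc : ∀ i, ((f i).map (Polynomial.evalRingHom t)).Separable) :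
    (¬ Irreducible (P.map (Polynomial.evalRingHom t)) ∨
        IsEmpty ((P.map (Polynomial.evalRingHom t)).Gal ≃*
          (P.map (algebraMap (Polynomial ℚ) (RatFunc ℚ))).Gal)) ↔
      ∃ i, ∃ x : ℚ, ((f i).map (Polynomial.evalRingHom t)).eval x = 0 :=
  stmt_2_general (evalRingHom t) (fun x => ⟨C x, 1, by simp⟩) P
    ((hPirr.isPrimitive (by lia)).irreducible_iff_irreducible_map_fraction_map.mp hPirr) hsep
    M hmax hrep f (fun i => (hmonic i).irreducible_iff_irreducible_map_fraction_map.mp (hirr i))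
    hgen hl hΔ (fun i => by simp [hmonic i]) hdisc
end

section
/- Let k be a field of characteristic 0, let P ∈ k[T][X] be separable of degree n ≥ 1 in X over k(T) with discriminant Δ(T) and leading coefficient ℓ(T), let N be a splitting field of P over k(T) with Galois group G = Gal(N/k(T)), let A = k[T][ℓ(T)⁻¹], and let O_N be the integral closure of A in N. Suppose t ∈ k satisfies Δ(t)·ℓ(t) ≠ 0, let 𝔭_t be the kernel of the evaluation homomorphism A → k extending a(T) ↦ a(t), and let 𝔓 be any prime of O_N dividing 𝔭_t·O_N. Then the decomposition group G_𝔓 = {σ ∈ G : σ(𝔓) = 𝔓} is isomorphic (as a group) to the Galois group G_t of the specialized polynomial P(t,X) over k. -/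
open Polynomial

set_option maxHeartbeats 1000000
set_option synthInstance.maxHeartbeats 200000

/-!
Since the leading coefficient of `P` is a unit of `A`, all roots of `P` are integral over `A`, so
`P` already splits over `O_N`. Hence `P(t,X)` splits over the residue field at `𝔓`, and the
surjection from the decomposition group onto the automorphism group of the residue field extension
can be followed by the restriction to the splitting field of `P(t,X)`. The composite
`G_𝔓 → Gal(P(t,X))` is injective because `P(t,X)` is separable: reduction modulo `𝔓` is then
injective on the roots of `P`, and an element of `G` is determined by its action on these roots.
-/

section Roots

theorem injOn_roots_of_separable_map {B L : Type*} [CommRing B] [IsDomain B] [CommRing L]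
    [IsDomain L] {π : B →+* L} {f : B[X]} (hf : (f.map π).Separable) :
    Set.InjOn π {b | f.IsRoot b} := by
  have hf₀ : f ≠ 0 := fun h ↦ by simpa [h] using hf.ne_zero
  have hnodup : (f.roots.map π).Nodup :=
    Multiset.nodup_of_le (map_roots_le hf.ne_zero) (nodup_roots hf)
  exact fun b hb c hc ↦ Multiset.inj_on_of_nodup_map hnodup b ((mem_roots hf₀).2 hb) c
    ((mem_roots hf₀).2 hc)

theorem isIntegral_of_aeval_eq_zero_of_isUnit_leadingCoeff {A S : Type*} [CommRing A] [CommRing S]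
    [Algebra A S] {p : A[X]} (hp : IsUnit p.leadingCoeff) {x : S} (hx : aeval x p = 0) :
    IsIntegral A x := by
  obtain ⟨u, hu⟩ := hp
  have hux : IsIntegral A ((u : A) • x) := hu ▸ isIntegral_leadingCoeff_smul p x hx
  simpa only [smul_smul, Units.inv_mul, one_smul] using hux.smul (↑u⁻¹ : A)

theorem splits_map_integralClosure_s5 {A N : Type*} [CommRing A] [CommRing N] [IsDomain N]
    [Algebra A N] {p : A[X]} (hp : IsUnit p.leadingCoeff) (hspl : (p.map (algebraMap A N)).Splits) :
    (p.map (algebraMap A (integralClosure A N))).Splits := by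
  rw [IsScalarTower.algebraMap_eq A (integralClosure A N) N, ← Polynomial.map_map] at hspl
  refine hspl.of_splits_map_of_injective Subtype.val_injective fun x hx ↦ ?_
  have hroot : aeval x p = 0 := by
    simpa only [IsRoot, eval_map_algebraMap, aeval_map_algebraMap] using isRoot_of_mem_roots hx
  exact ⟨⟨x, isIntegral_of_aeval_eq_zero_of_isUnit_leadingCoeff hp hroot⟩, rfl⟩

theorem faithfulSMul_rootSet_of_isSplittingField {A F N : Type*} [CommRing A] [Field F] [Field N]
    [Algebra A F] [Algebra F N] [Algebra A N] [IsScalarTower A F N] (p : A[X])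
    [(p.map (algebraMap A F)).IsSplittingField F N] : FaithfulSMul Gal(N/F) (p.rootSet N) where
  eq_of_smul_eq_smul {σ τ} h := by
    have hστ : (σ : N →ₐ[F] N) = τ := by
      refine AlgHom.ext_of_adjoin_eq_top
        (IsSplittingField.adjoin_rootSet N (p.map (algebraMap A F))) fun x hx ↦ ?_
      have hxp : x ∈ p.rootSet N := by
        rwa [rootSet, aroots, Polynomial.map_map, ← IsScalarTower.algebraMap_eq] at hx
      exact congrArg Subtype.val (h ⟨x, hxp⟩)
    exact AlgEquiv.ext fun x ↦ DFunLike.congr_fun hστ x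

theorem faithfulSMul_rootSet_integralClosure_s5 {A N G : Type*} [CommRing A] [CommRing N] [IsDomain N]
    [Algebra A N] [Group G] [MulSemiringAction G N] [SMulCommClass G A N] {p : A[X]}
    (hp : IsUnit p.leadingCoeff) [FaithfulSMul G (p.rootSet N)] :
    FaithfulSMul G (p.rootSet (integralClosure A N)) where
  eq_of_smul_eq_smul {g h} hgh := by
    refine FaithfulSMul.eq_of_smul_eq_smul (α := p.rootSet N) fun ⟨x, hx⟩ ↦ ?_
    obtain ⟨hp₀, hx₀⟩ := mem_rootSet'.1 hx
    let b : integralClosure A N :=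
      ⟨x, isIntegral_of_aeval_eq_zero_of_isUnit_leadingCoeff hp hx₀⟩
    have hb : b ∈ p.rootSet (integralClosure A N) := by
      refine mem_rootSet'.2 ⟨fun h ↦ hp₀ ?_, Subtype.ext ?_⟩
      · rw [IsScalarTower.algebraMap_eq A (integralClosure A N) N, ← Polynomial.map_map, h,
          Polynomial.map_zero]
      · exact (aeval_algebraMap_apply N b p).symm.trans hx₀
    exact Subtype.ext (congrArg (fun y ↦ (y.1 : N)) (hgh ⟨b, hb⟩))

end Roots

theorem liesOver_of_map_le {A B : Type*} [CommRing A] [CommRing B] [Algebra A B] {I : Ideal A}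
    (hI : I.IsMaximal) {Q : Ideal B} [Q.IsPrime] (h : I.map (algebraMap A B) ≤ Q) :
    Q.LiesOver I :=
  ⟨hI.eq_of_le (Ideal.IsPrime.under A Q).ne_top (Ideal.map_le_iff_le_comap.1 h)⟩

theorem isFractionRing_of_surjective_algebraMap {R K : Type*} [CommRing R] [Field K] [Algebra R K]
    [FaithfulSMul R K] (h : Function.Surjective (algebraMap R K)) : IsFractionRing R K :=
  .of_field R K fun x ↦
    let ⟨a, ha⟩ := h x
    ⟨a, 1, by rw [ha, map_one, div_one]⟩

section Residue

open scoped Pointwise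

variable {A B G : Type*} [CommRing A] [CommRing B] [Algebra A B] [Group G]
  [MulSemiringAction G B] (I : Ideal A) (Q : Ideal B) [Q.LiesOver I] {k L : Type*} [Field k]
  [Field L] [Algebra (A ⧸ I) k] [Algebra (B ⧸ Q) L] [Algebra (A ⧸ I) L] [Algebra k L]
  [IsScalarTower (A ⧸ I) k L] [IsScalarTower (A ⧸ I) (B ⧸ Q) L]

theorem map_map_algebraMap_comp_mk (p : A[X]) :
    (p.map ((algebraMap (A ⧸ I) k).comp (Ideal.Quotient.mk I))).map (algebraMap k L) =
      (p.map (algebraMap A B)).map ((algebraMap (B ⧸ Q) L).comp (Ideal.Quotient.mk Q)) := by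
  rw [Polynomial.map_map, Polynomial.map_map, ← RingHom.comp_assoc,
    ← IsScalarTower.algebraMap_eq, IsScalarTower.algebraMap_eq (A ⧸ I) (B ⧸ Q) L]
  rfl

variable [IsDomain B] [SMulCommClass G A B] {p : A[X]} [FaithfulSMul G (p.rootSet B)]

theorem eq_one_of_forall_rootSet_map_smul_eq {L : Type*} [CommRing L] [IsDomain L] {π : B →+* L}
    (hsep : ((p.map (algebraMap A B)).map π).Separable) {g : G}
    (hg : ∀ b ∈ p.rootSet B, π (g • b) = π b) : g = 1 := by
  refine FaithfulSMul.eq_of_smul_eq_smul (α := p.rootSet B) fun b ↦ Subtype.ext ?_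
  have isRoot (c : p.rootSet B) : (p.map (algebraMap A B)).IsRoot c := by
    rw [IsRoot, eval_map_algebraMap]
    exact aeval_eq_zero_of_mem_rootSet c.2
  rw [one_smul]
  exact injOn_roots_of_separable_map hsep (isRoot (g • b)) (isRoot b) (hg b b.2)

variable [IsFractionRing (A ⧸ I) k] [IsFractionRing (B ⧸ Q) L]

theorem gal_restrict_comp_stabilizerHom_injective {q : k[X]}
    (hq : p.map ((algebraMap (A ⧸ I) k).comp (Ideal.Quotient.mk I)) = q) (hsep : q.Separable)
    [Fact (q.map (algebraMap k L)).Splits] :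
    Function.Injective ((Gal.restrict q L).comp (IsFractionRing.stabilizerHom G I Q k L)) := by
  let π : B →+* L := (algebraMap (B ⧸ Q) L).comp (Ideal.Quotient.mk Q)
  have hqπ : q.map (algebraMap k L) = (p.map (algebraMap A B)).map π := by
    rw [← hq, map_map_algebraMap_comp_mk I Q]
  refine (injective_iff_map_eq_one _).2 fun g hg ↦ Subtype.ext ?_
  refine eq_one_of_forall_rootSet_map_smul_eq (p := p) (π := π) (hqπ ▸ hsep.map) fun b hb ↦ ?_
  have hroot : π b ∈ q.rootSet L := by
    refine (mem_rootSet_of_ne hsep.ne_zero).2 ?_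
    rw [← eval_map_algebraMap, hqπ, eval_map_apply, eval_map_algebraMap,
      aeval_eq_zero_of_mem_rootSet hb, map_zero]
  calc
    π (g • b) = IsFractionRing.stabilizerHom G I Q k L g (π b) :=
      (IsFractionRing.stabilizerHom_apply_apply_mk G I Q k L g b).symm
    _ = (Gal.restrict q L (IsFractionRing.stabilizerHom G I Q k L g) •
          (⟨π b, hroot⟩ : q.rootSet L) : q.rootSet L) :=
      (Gal.restrict_smul _ (⟨π b, hroot⟩ : q.rootSet L)).symm
    _ = π b := by rw [show Gal.restrict q L (IsFractionRing.stabilizerHom G I Q k L g) = 1 from hg,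
        one_smul]

theorem nonempty_stabilizer_mulEquiv_gal [Q.IsPrime] [Finite G] [Algebra.IsInvariant A B G]
    (hspl : (p.map (algebraMap A B)).Splits) {q : k[X]}
    (hq : p.map ((algebraMap (A ⧸ I) k).comp (Ideal.Quotient.mk I)) = q) (hsep : q.Separable) :
    Nonempty (MulAction.stabilizer G Q ≃* q.Gal) := by
  let L := FractionRing (B ⧸ Q)
  have hinj : Function.Injective (algebraMap (A ⧸ I) L) := by
    rw [IsScalarTower.algebraMap_eq (A ⧸ I) (B ⧸ Q) L]
    exact (IsFractionRing.injective (B ⧸ Q) L).comp (FaithfulSMul.algebraMap_injective _ _)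
  let : Algebra k L := (IsFractionRing.lift hinj).toAlgebra
  have : IsScalarTower (A ⧸ I) k L :=
    .of_algebraMap_eq fun x ↦ (IsFractionRing.lift_algebraMap hinj x).symm
  have : I.IsPrime := Ideal.over_def Q I ▸ Ideal.IsPrime.under A Q
  have : Normal k L := Ideal.IsFractionRing.normal G I Q k L
  have : Fact (q.map (algebraMap k L)).Splits := ⟨by
    rw [← hq, map_map_algebraMap_comp_mk I Q]
    exact hspl.map _⟩
  exact ⟨.ofBijective ((Gal.restrict q L).comp (IsFractionRing.stabilizerHom G I Q k L))
    ⟨gal_restrict_comp_stabilizerHom_injective I Q hq hsep,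
      (Gal.restrict_surjective q L).comp (IsFractionRing.stabilizerHom_surjective G I Q k L)⟩⟩

theorem nonempty_stabilizer_mulEquiv_gal_map [Q.IsPrime] [Finite G] [Algebra.IsInvariant A B G]
    (hspl : (p.map (algebraMap A B)).Splits) {φ : A →+* k} (hφ : Function.Surjective φ)
    (hQ : (RingHom.ker φ).map (algebraMap A B) ≤ Q) (hsep : (p.map φ).Separable) :
    Nonempty (MulAction.stabilizer G Q ≃* (p.map φ).Gal) := by
  have : Q.LiesOver (RingHom.ker φ) :=
    liesOver_of_map_le (RingHom.ker_isMaximal_of_surjective φ hφ) hQ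
  let : Algebra (A ⧸ RingHom.ker φ) k := (RingHom.kerLift φ).toAlgebra
  have : FaithfulSMul (A ⧸ RingHom.ker φ) k :=
    (faithfulSMul_iff_algebraMap_injective _ _).2 (RingHom.kerLift_injective φ)
  have : IsFractionRing (A ⧸ RingHom.ker φ) k :=
    isFractionRing_of_surjective_algebraMap
      (Ideal.Quotient.lift_surjective_of_surjective _ _ hφ)
  exact nonempty_stabilizer_mulEquiv_gal (RingHom.ker φ) Q hspl rfl hsep

end Residue

section IntegralClosure

open scoped Pointwise

section Group

variable {A N G : Type*} [CommRing A] [CommRing N] [Algebra A N] [Group G] [MulSemiringAction G N]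
  [SMulCommClass G A N]

theorem image_val_integralClosure_smul (g : G) (Q : Ideal (integralClosure A N)) :
    Subtype.val '' ((g • Q : Ideal (integralClosure A N)) : Set (integralClosure A N)) =
      (g • ·) '' (Subtype.val '' (Q : Set (integralClosure A N))) := by
  have hcoe : ((g • Q : Ideal (integralClosure A N)) : Set (integralClosure A N)) =
      g • (Q : Set (integralClosure A N)) := by
    ext x
    rw [SetLike.mem_coe, Ideal.mem_pointwise_smul_iff_inv_smul_mem,
      Set.mem_smul_set_iff_inv_smul_mem, SetLike.mem_coe]
  rw [hcoe, ← Set.image_smul]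
  exact Set.image_comm fun _ ↦ rfl

theorem coe_stabilizer_integralClosure (Q : Ideal (integralClosure A N)) :
    (MulAction.stabilizer G Q : Set G) =
      {g | (g • ·) '' (Subtype.val '' (Q : Set (integralClosure A N))) =
        Subtype.val '' (Q : Set (integralClosure A N))} := by
  ext g
  rw [SetLike.mem_coe, MulAction.mem_stabilizer_iff, Set.mem_ofPred_eq,
    ← image_val_integralClosure_smul, Subtype.val_injective.image_injective.eq_iff,
    SetLike.coe_set_eq]

end Group

theorem nonempty_stabilizer_integralClosure_mulEquiv_gal {A F N : Type*} [CommRing A]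
    [IsIntegrallyClosed A] [Field F] [Field N] [Algebra A F] [IsFractionRing A F] [Algebra F N]
    [Algebra A N] [IsScalarTower A F N] {p : A[X]} (hp : IsUnit p.leadingCoeff)
    (hsepF : (p.map (algebraMap A F)).Separable) [(p.map (algebraMap A F)).IsSplittingField F N]
    (Q : Ideal (integralClosure A N)) [Q.IsPrime] {k : Type*} [Field k] {φ : A →+* k}
    (hφ : Function.Surjective φ)
    (hQ : (RingHom.ker φ).map (algebraMap A (integralClosure A N)) ≤ Q)
    (hsep : (p.map φ).Separable) :
    Nonempty (MulAction.stabilizer Gal(N/F) Q ≃* (p.map φ).Gal) := by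
  let f := p.map (algebraMap A F)
  have : IsDomain A := (IsFractionRing.injective A F).isDomain
  have : FiniteDimensional F N := IsSplittingField.finiteDimensional N f
  have : IsGalois F N := IsGalois.of_separable_splitting_field hsepF
  have hfN : f.map (algebraMap F N) = p.map (algebraMap A N) := by
    rw [Polynomial.map_map, ← IsScalarTower.algebraMap_eq]
  have : FaithfulSMul Gal(N/F) (p.rootSet N) := faithfulSMul_rootSet_of_isSplittingField p
  have : FaithfulSMul Gal(N/F) (p.rootSet (integralClosure A N)) :=
    faithfulSMul_rootSet_integralClosure_s5 hp
  have : IsFractionRing (integralClosure A N) N :=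
    integralClosure.isFractionRing_of_finite_extension F N
  have := IsGaloisGroup.of_isFractionRing Gal(N/F) A (integralClosure A N) F N
  have : Algebra.IsInvariant A (integralClosure A N) Gal(N/F) := IsGaloisGroup.isInvariant
  have hspl : (p.map (algebraMap A N)).Splits := hfN ▸ IsSplittingField.splits N f
  exact nonempty_stabilizer_mulEquiv_gal_map Q (splits_map_integralClosure_s5 hp hspl) hφ hQ hsep

end IntegralClosure

section Localization

open scoped Pointwise

theorem isScalarTower_of_isLocalization {R A K N : Type*} [CommRing R] [CommRing A] [CommRing K]
    [CommRing N] [Algebra R A] [Algebra R K] [Algebra A K] [Algebra K N] [Algebra A N]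
    [IsScalarTower R A K] (M : Submonoid R) [IsLocalization M A]
    (h : (algebraMap A N).comp (algebraMap R A) = (algebraMap K N).comp (algebraMap R K)) :
    IsScalarTower A K N :=
  .of_algebraMap_eq' <| IsLocalization.ringHom_ext M <| by
    rw [h, RingHom.comp_assoc, ← IsScalarTower.algebraMap_eq R A K]

variable {R A K N k : Type*} [CommRing R] [IsIntegrallyClosed R] [CommRing A] [Field K] [Field N]
  [Field k] [Algebra R A] [Algebra R K] [IsFractionRing R K] [Algebra K N] [Algebra A N] {P : R[X]}
  [IsLocalization.Away P.leadingCoeff A] [(P.map (algebraMap R K)).IsSplittingField K N]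
  {φ : R →+* k} {ev : A →+* k} (𝔓 : Ideal (integralClosure A N)) [𝔓.IsPrime]

theorem nonempty_stabilizer_integralClosure_away_mulEquiv_gal [Algebra A K] [IsScalarTower R A K]
    [IsScalarTower A K N] (hsep : (P.map (algebraMap R K)).Separable)
    (hφ : Function.Surjective φ) (hsepφ : (P.map φ).Separable)
    (hev : ev.comp (algebraMap R A) = φ)
    (h𝔓 : (RingHom.ker ev).map (algebraMap A (integralClosure A N)) ≤ 𝔓) :
    Nonempty (MulAction.stabilizer Gal(N/K) 𝔓 ≃* (P.map φ).Gal) := by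
  have : IsDomain R := (IsFractionRing.injective R K).isDomain
  have hP₀ : P.leadingCoeff ≠ 0 :=
    leadingCoeff_ne_zero.2 fun h ↦ hsep.ne_zero (by rw [h, Polynomial.map_zero])
  have hM : Submonoid.powers P.leadingCoeff ≤ nonZeroDivisors R :=
    powers_le_nonZeroDivisors_of_noZeroDivisors hP₀
  have : IsDomain A := IsLocalization.isDomain_of_le_nonZeroDivisors A hM
  have : IsIntegrallyClosed A :=
    isIntegrallyClosed_of_isLocalization A (.powers P.leadingCoeff) hM
  have : IsFractionRing A K :=
    IsFractionRing.isFractionRing_of_isDomain_of_isLocalization (.powers P.leadingCoeff) A K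
  have hPK : (P.map (algebraMap R A)).map (algebraMap A K) = P.map (algebraMap R K) := by
    rw [Polynomial.map_map, ← IsScalarTower.algebraMap_eq]
  have hPk : (P.map (algebraMap R A)).map ev = P.map φ := by rw [Polynomial.map_map, hev]
  have : ((P.map (algebraMap R A)).map (algebraMap A K)).IsSplittingField K N := by rwa [hPK]
  have hlead : IsUnit (P.map (algebraMap R A)).leadingCoeff := by
    rw [leadingCoeff_map_of_injective (IsLocalization.injective A hM)]
    exact IsLocalization.Away.algebraMap_isUnit _
  have hevsurj : Function.Surjective ev :=
    .of_comp (g := algebraMap R A) (by rwa [← RingHom.coe_comp, hev])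
  rw [← hPk] at hsepφ ⊢
  exact nonempty_stabilizer_integralClosure_mulEquiv_gal hlead (hPK.symm ▸ hsep) 𝔓 hevsurj h𝔓
    hsepφ

theorem stmt_5_general (hsep : (P.map (algebraMap R K)).Separable)
    (hAN : (algebraMap A N).comp (algebraMap R A) = (algebraMap K N).comp (algebraMap R K))
    (hφ : Function.Surjective φ) (hsepφ : (P.map φ).Separable)
    (hev : ev.comp (algebraMap R A) = φ)
    (h𝔓 : (RingHom.ker ev).map (algebraMap A (integralClosure A N)) ≤ 𝔓) :
    ∃ H : Subgroup Gal(N/K),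
      (H : Set Gal(N/K)) = {σ : Gal(N/K) | σ '' (Subtype.val '' (𝔓 : Set (integralClosure A N))) =
        Subtype.val '' (𝔓 : Set (integralClosure A N))} ∧
      Nonempty (H ≃* (P.map φ).Gal) := by
  have hlead : algebraMap R K P.leadingCoeff ≠ 0 := fun h ↦
    hsep.ne_zero <| by
      rw [leadingCoeff_eq_zero.1 ((map_eq_zero_iff _ (IsFractionRing.injective R K)).1 h),
        Polynomial.map_zero]
  let : Algebra A K := (IsLocalization.Away.lift P.leadingCoeff hlead.isUnit).toAlgebra
  have : IsScalarTower R A K :=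
    .of_algebraMap_eq fun x ↦ (IsLocalization.Away.lift_eq _ hlead.isUnit x).symm
  have : IsScalarTower A K N := isScalarTower_of_isLocalization (.powers P.leadingCoeff) hAN
  exact ⟨MulAction.stabilizer Gal(N/K) 𝔓, coe_stabilizer_integralClosure 𝔓,
    nonempty_stabilizer_integralClosure_away_mulEquiv_gal 𝔓 hsep hφ hsepφ hev h𝔓⟩

end Localization

/-- Proposition `decomposition_group_prop`: With `k` of characteristic `0`,
`P ∈ k[T][X]` separable of degree `n ≥ 1` in `X` over `k(T)` with discriminant `Δ` and
leading coefficient `ℓ`, `N` the splitting field of `P` over `k(T)` with Galois group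
`G = Gal(N/k(T))`, `A = k[T][ℓ⁻¹]`, and `O_N = integralClosure A N`: if `t ∈ k`
satisfies `Δ(t)·ℓ(t) ≠ 0` (equivalently `ℓ(t) ≠ 0` and `P(t,X)` separable), `𝔭_t` is
the kernel of the evaluation map `ev : A → k` extending `a(T) ↦ a(t)`, and `𝔓` is any
prime of `O_N` dividing `𝔭_t·O_N`, then the decomposition group
`G_𝔓 = {σ ∈ G | σ(𝔓) = 𝔓}` is isomorphic as a group to the Galois group `G_t` of the
specialization `P(t,X)` over `k`. -/
theorem stmt_5 {k : Type*} [Field k] [CharZero k]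
    (P : Polynomial (Polynomial k))
    (hdeg : 1 ≤ P.natDegree)
    (hsep : (P.map (algebraMap (Polynomial k) (RatFunc k))).Separable)
    (A : Type*) [CommRing A] [Algebra (Polynomial k) A]
    [IsLocalization.Away P.leadingCoeff A]
    [Algebra A (P.map (algebraMap (Polynomial k) (RatFunc k))).SplittingField]
    (hAN : (algebraMap A
          (P.map (algebraMap (Polynomial k) (RatFunc k))).SplittingField).comp
        (algebraMap (Polynomial k) A) =
      (algebraMap (RatFunc k)
          (P.map (algebraMap (Polynomial k) (RatFunc k))).SplittingField).comp
        (algebraMap (Polynomial k) (RatFunc k)))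
    (t : k)
    (hl : P.leadingCoeff.eval t ≠ 0)
    (hΔ : (P.map (Polynomial.evalRingHom t)).Separable)
    (ev : A →+* k)
    (hev : ev.comp (algebraMap (Polynomial k) A) = Polynomial.evalRingHom t)
    (𝔓 : Ideal (integralClosure A
      (P.map (algebraMap (Polynomial k) (RatFunc k))).SplittingField))
    (h𝔓 : 𝔓.IsMaximal)
    (h𝔓dvd : Ideal.map (algebraMap A (integralClosure A
        (P.map (algebraMap (Polynomial k) (RatFunc k))).SplittingField))
      (RingHom.ker ev) ≤ 𝔓) :
    ∃ H : Subgroup (P.map (algebraMap (Polynomial k) (RatFunc k))).Gal,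
      (H : Set (P.map (algebraMap (Polynomial k) (RatFunc k))).Gal) =
        {σ : (P.map (algebraMap (Polynomial k) (RatFunc k))).SplittingField ≃ₐ[RatFunc k]
            (P.map (algebraMap (Polynomial k) (RatFunc k))).SplittingField | ⇑σ '' (Subtype.val '' (𝔓 : Set (integralClosure A
            (P.map (algebraMap (Polynomial k) (RatFunc k))).SplittingField))) =
          Subtype.val '' (𝔓 : Set (integralClosure A
            (P.map (algebraMap (Polynomial k) (RatFunc k))).SplittingField))} ∧
      Nonempty (H ≃* (P.map (Polynomial.evalRingHom t)).Gal) := 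
  have := h𝔓.isPrime
  stmt_5_general 𝔓 hsep hAN (eval_surjective t) hΔ hev h𝔓dvd
end
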